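/- Let v ∈ ℂ^m ⊗ ℂ^n be a unit vector with Schmidt coefficients α₁ ≥ α₂ ≥ … ≥ α_{min(m,n)} ≥ 0 and fix 1 ≤ k ≤ min(m,n). Define the norm ‖w‖_{s(k)} := sup{ |⟨u, w⟩| : u a unit vector in ℂ^m ⊗ ℂ^n with SR(u) ≤ k }. Let r be the largest index with 1 ≤ r < k such that α_r > (Σ_{i=r+1}^{min(m,n)} α_i)/(k−r), taking r = 0 if no such index exists, and set α̃ := (Σ_{i=r+1}^{min(m,n)} α_i)/(k−r). Then the dual norm satisfies ‖v‖_{s(k)}° = sqrt( Σ_{i=1}^r α_i² + (k−r)α̃² ). -/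

import Mathlib

open scoped Kronecker ComplexOrder
open Matrix

namespace Ent

variable {ι κ : Type*} [Fintype ι] [Fintype κ]

/-- Inner product ⟨v,w⟩ = Σᵢ conj(v i) * (w i) (conjugate-linear in the first argument). -/
noncomputable def vinner (v w : ι → ℂ) : ℂ := dotProduct (star v) w

/-- An elementary (product) tensor a ⊗ b in ℂ^ι ⊗ ℂ^κ. -/
def prodVec (a : ι → ℂ) (b : κ → ℂ) : ι × κ → ℂ := fun p => a p.1 * b p.2

/-- `v` has Schmidt rank at most `k`. -/
def SchmidtRankLE (k : ℕ) (v : ι × κ → ℂ) : Prop :=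
  ∃ (a : Fin k → ι → ℂ) (b : Fin k → κ → ℂ), v = ∑ i, prodVec (a i) (b i)

/-- The rank-one operator |v⟩⟨w|. -/
noncomputable def ketBra (v : ι → ℂ) (w : κ → ℂ) : Matrix ι κ ℂ :=
  Matrix.vecMulVec v (star w)

/-- A finite family of vectors is orthonormal. -/
def Orthonormal' {N : Type*} [DecidableEq N] (v : N → ι → ℂ) : Prop :=
  ∀ i j, vinner (v i) (v j) = if i = j then 1 else 0

/-- The S(k)-norm of `X ∈ M_ι ⊗ M_κ`. -/
noncomputable def SkNorm (k : ℕ) (X : Matrix (ι × κ) (ι × κ) ℂ) : ℝ :=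
  sSup { r | ∃ v w : ι × κ → ℂ, vinner v v = 1 ∧ vinner w w = 1 ∧
    SchmidtRankLE k v ∧ SchmidtRankLE k w ∧
    r = ‖vinner v (X.mulVec w)‖ }

/-- The product numerical radius r_k^⊗. -/
noncomputable def prodRad (k : ℕ) (Y : Matrix (ι × κ) (ι × κ) ℂ) : ℝ :=
  sSup { r | ∃ v : ι × κ → ℂ, vinner v v = 1 ∧ SchmidtRankLE k v ∧
    r = ‖vinner v (Y.mulVec v)‖ }

/-- The norm ‖·‖_{γ,k}. -/
noncomputable def gammaNorm (k : ℕ) (X : Matrix (ι × κ) (ι × κ) ℂ) : ℝ :=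
  sInf { r | ∃ (N : ℕ) (c : Fin N → ℂ) (v w : Fin N → (ι × κ → ℂ)),
    (∀ i, vinner (v i) (v i) = 1 ∧ vinner (w i) (w i) = 1 ∧
      SchmidtRankLE k (v i) ∧ SchmidtRankLE k (w i)) ∧
    X = ∑ i, c i • ketBra (v i) (w i) ∧
    r = ∑ i, ‖c i‖ }

/-- `ρ` is a density matrix. -/
def IsDensity (ρ : Matrix ι ι ℂ) : Prop := ρ.PosSemidef ∧ ρ.trace = 1

/-- `ρ` has Schmidt number at most `k`: it is a convex combination of projections onto
unit vectors of Schmidt rank at most `k`. -/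
def SchmidtNumLE (k : ℕ) (ρ : Matrix (ι × κ) (ι × κ) ℂ) : Prop :=
  ∃ (N : ℕ) (p : Fin N → ℝ) (v : Fin N → (ι × κ → ℂ)),
    (∀ i, 0 ≤ p i ∧ vinner (v i) (v i) = 1 ∧ SchmidtRankLE k (v i)) ∧
    (∑ i, p i) = 1 ∧ ρ = ∑ i, p i • ketBra (v i) (v i)

/-- The robustness norm R_k on Hermitian operators. -/
noncomputable def Rk (k : ℕ) (Y : Matrix (ι × κ) (ι × κ) ℂ) : ℝ :=
  sInf { r | ∃ (c₁ c₂ : ℝ) (ρ₁ ρ₂ : Matrix (ι × κ) (ι × κ) ℂ),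
    0 ≤ c₁ ∧ 0 ≤ c₂ ∧ IsDensity ρ₁ ∧ IsDensity ρ₂ ∧
    SchmidtNumLE k ρ₁ ∧ SchmidtNumLE k ρ₂ ∧
    Y = c₁ • ρ₁ - c₂ • ρ₂ ∧ r = c₁ + c₂ }

/-- `Y` is k-block positive: ⟨v|Y|v⟩ ≥ 0 for every unit vector of Schmidt rank at most `k`. -/
def KBlockPos (k : ℕ) (Y : Matrix (ι × κ) (ι × κ) ℂ) : Prop :=
  ∀ v : ι × κ → ℂ, vinner v v = 1 → SchmidtRankLE k v →
    0 ≤ (vinner v (Y.mulVec v)).re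

/-- Dual of a norm on matrices, w.r.t. the Hilbert–Schmidt inner product ⟨W,X⟩ = Tr(Wᴴ X). -/
noncomputable def dualNormM (f : Matrix ι κ ℂ → ℝ) (X : Matrix ι κ ℂ) : ℝ :=
  sSup { r | ∃ W : Matrix ι κ ℂ, f W ≤ 1 ∧ r = ‖(Wᴴ * X).trace‖ }

/-- Dual of a norm, computed in the real Hilbert space of Hermitian matrices with the
Hilbert–Schmidt inner product ⟨W,Y⟩ = Tr(WY). -/
noncomputable def dualNormHerm (f : Matrix ι ι ℂ → ℝ) (Y : Matrix ι ι ℂ) : ℝ :=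
  sSup { r | ∃ W : Matrix ι ι ℂ, W.IsHermitian ∧ f W ≤ 1 ∧ r = |((W * Y).trace).re| }

/-- The Frobenius norm of a matrix. -/
noncomputable def frobNorm (X : Matrix ι κ ℂ) : ℝ :=
  Real.sqrt (∑ i, ∑ j, Complex.normSq (X i j))

/-- The (k,2)-norm: ‖X‖_{(k,2)} = sup { |Tr(XY)| : rank Y ≤ k, ‖Y‖_F ≤ 1 }. -/
noncomputable def kNorm (k : ℕ) (X : Matrix ι κ ℂ) : ℝ :=
  sSup { r | ∃ Y : Matrix κ ι ℂ, Y.rank ≤ k ∧ frobNorm Y ≤ 1 ∧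
    r = ‖(X * Y).trace‖ }

/-- The trace norm: the sum of the singular values, i.e. of the square roots of the
eigenvalues of Xᴴ X. -/
noncomputable def traceNorm [DecidableEq κ] (X : Matrix ι κ ℂ) : ℝ :=
  ∑ i, Real.sqrt ((Matrix.isHermitian_conjTranspose_mul_self X).eigenvalues i)

/-- The s(k) vector norm: sup of |⟨u,w⟩| over unit vectors u of Schmidt rank at most k. -/
noncomputable def skVecNorm (k : ℕ) (w : ι × κ → ℂ) : ℝ :=
  sSup { r | ∃ u : ι × κ → ℂ, vinner u u = 1 ∧ SchmidtRankLE k u ∧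
    r = ‖vinner u w‖ }

/-- Dual of a norm on vectors. -/
noncomputable def dualNormV (f : (ι × κ → ℂ) → ℝ) (v : ι × κ → ℂ) : ℝ :=
  sSup { r | ∃ w : ι × κ → ℂ, f w ≤ 1 ∧ r = ‖vinner w v‖ }

/-- The realignment map, L(X)_{(i,k),(j,l)} = X_{(i,j),(k,l)}. -/
def realign {m n : ℕ} (X : Matrix (Fin m × Fin n) (Fin m × Fin n) ℂ) :
    Matrix (Fin m × Fin m) (Fin n × Fin n) ℂ :=
  fun p q => X (p.1, q.1) (p.2, q.2)

/-- The projective tensor norm on M_{m,n} ⊗ M_{m,n}. -/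
noncomputable def projNorm {m n : ℕ} (Z : Matrix (Fin m × Fin m) (Fin n × Fin n) ℂ) : ℝ :=
  sInf { r | ∃ (N : ℕ) (A B : Fin N → Matrix (Fin m) (Fin n) ℂ),
    Z = ∑ i, A i ⊗ₖ B i ∧ r = ∑ i, traceNorm (A i) * traceNorm (B i) }


theorem thresh (S I : Finset ℕ) (hI : I ⊆ S) (x z : ℕ → ℝ) (c : ℝ)
    (h0 : ∀ i ∈ S, 0 ≤ x i) (h1 : ∀ i ∈ S, x i ≤ 1)
    (hz : ∀ i ∈ I, c ≤ z i) (hz' : ∀ i ∈ S, i ∉ I → z i ≤ c)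
    (hc : c * ∑ i ∈ S, x i ≤ c * I.card) : ∑ i ∈ S, x i * z i ≤ ∑ i ∈ I, z i := by
  have e1 : ∑ i ∈ S, x i * (z i - c) ≤ ∑ i ∈ S, if i ∈ I then z i - c else 0 := by
    apply Finset.sum_le_sum
    intro i hi
    split_ifs with h
    · nlinarith [h1 i hi, hz i h]
    · nlinarith [h0 i hi, hz' i hi h]
  rw [← Finset.sum_filter, Finset.filter_mem_eq_inter, Finset.inter_eq_right.2 hI] at e1
  simp only [mul_sub, Finset.sum_sub_distrib, ← Finset.sum_mul, Finset.sum_const,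
    nsmul_eq_mul] at e1
  linarith

theorem exists_top (S : Finset ℕ) (z : ℕ → ℝ) (q : ℕ) (hq : q ≤ S.card) :
    ∃ I ⊆ S, I.card = q ∧ ∀ i ∈ I, ∀ j ∈ S, j ∉ I → z j ≤ z i := by
  induction q with
  | zero => exact ⟨∅, by simp, by simp, by simp⟩
  | succ q ih =>
    obtain ⟨I, hIS, hc, hI⟩ := ih (by omega)
    have hne : (S \ I).Nonempty := by
      rw [← Finset.card_pos, Finset.card_sdiff_of_subset hIS]; omega
    obtain ⟨l, hl, hmax⟩ := Finset.exists_max_image (S \ I) z hne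
    rw [Finset.mem_sdiff] at hl
    refine ⟨insert l I, ?_, ?_, ?_⟩
    · exact Finset.insert_subset hl.1 hIS
    · rw [Finset.card_insert_of_notMem hl.2, hc]
    · intro i hi j hj hjn
      rw [Finset.mem_insert, not_or] at hjn
      rcases Finset.mem_insert.1 hi with rfl | hi
      · exact hmax j (Finset.mem_sdiff.2 ⟨hj, hjn.2⟩)
      · exact hI i hi j hj hjn.2

theorem top_bound (S : Finset ℕ) (z : ℕ → ℝ) (q : ℕ) (hq1 : 1 ≤ q) (hq : q ≤ S.card) :
    ∃ I ⊆ S, I.card = q ∧ ∀ x : ℕ → ℝ, (∀ i ∈ S, 0 ≤ x i) → (∀ i ∈ S, x i ≤ 1) →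
      ∑ i ∈ S, x i = q → ∑ i ∈ S, x i * z i ≤ ∑ i ∈ I, z i := by
  obtain ⟨I, hIS, hc, hI⟩ := exists_top S z q hq
  refine ⟨I, hIS, hc, fun x h0 h1 hs => ?_⟩
  have hne : I.Nonempty := by rw [← Finset.card_pos]; omega
  obtain ⟨l, hl, hmin⟩ := Finset.exists_min_image I z hne
  exact thresh S I hIS x z (z l) h0 h1 hmin (fun j hj hjn => hI l hl j hj hjn) (by rw [hs, hc])

theorem vinner_eq (v w : ι → ℂ) : vinner v w = inner ℂ (WithLp.toLp 2 v) (WithLp.toLp 2 w) := by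
  rw [EuclideanSpace.inner_eq_star_dotProduct, vinner, dotProduct_comm]

theorem vinner_self (v : ι → ℂ) : vinner v v = ((‖WithLp.toLp 2 v‖ ^ 2 : ℝ) : ℂ) := by
  rw [vinner_eq, inner_self_eq_norm_sq_to_K]; simp

theorem vinner_prodVec (a c : ι → ℂ) (b d : κ → ℂ) :
    vinner (prodVec a b) (prodVec c d) = vinner a c * vinner b d := by
  simp only [vinner, dotProduct, prodVec, Fintype.sum_prod_type, Finset.sum_mul_sum, Pi.star_apply,
    star_mul']
  refine Finset.sum_congr rfl fun i _ => Finset.sum_congr rfl fun j _ => by ring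

theorem vinner_sum_left {τ : Type*} (s : Finset τ) (f : τ → ι → ℂ) (w : ι → ℂ) :
    vinner (∑ i ∈ s, f i) w = ∑ i ∈ s, vinner (f i) w := by
  simp only [vinner_eq, WithLp.toLp_sum, sum_inner]

theorem vinner_sum_right {τ : Type*} (s : Finset τ) (f : τ → ι → ℂ) (w : ι → ℂ) :
    vinner w (∑ i ∈ s, f i) = ∑ i ∈ s, vinner w (f i) := by
  simp only [vinner_eq, WithLp.toLp_sum, inner_sum]

theorem vinner_smul_right (c : ℂ) (v w : ι → ℂ) : vinner v (c • w) = c * vinner v w := by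
  simp only [vinner_eq, WithLp.toLp_smul, inner_smul_right]

theorem vinner_smul_left (c : ℂ) (v w : ι → ℂ) : vinner (c • v) w = star c * vinner v w := by
  simp only [vinner_eq, WithLp.toLp_smul, inner_smul_left]; rfl

theorem vinner_conj (v w : ι → ℂ) : star (vinner v w) = vinner w v := by
  simp only [vinner_eq]; exact inner_conj_symm _ _

theorem vinner_cs (v w : ι → ℂ) (x y : ℝ) (hx : vinner v v = (x : ℂ)) (hy : vinner w w = (y : ℂ)) :
    ‖vinner v w‖ ^ 2 ≤ x * y := by
  rw [vinner_self] at hx hy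
  have hx' : ‖WithLp.toLp 2 v‖ ^ 2 = x := by exact_mod_cast hx
  have hy' : ‖WithLp.toLp 2 w‖ ^ 2 = y := by exact_mod_cast hy
  rw [vinner_eq, ← hx', ← hy', ← mul_pow]
  exact pow_le_pow_left₀ (norm_nonneg _) (norm_inner_le_norm _ _) 2

theorem bessel {τ : Type*} [DecidableEq τ] (s : Finset τ) (f : τ → ι → ℂ)
    (hf : ∀ i ∈ s, ∀ j ∈ s, vinner (f i) (f j) = if i = j then 1 else 0) (x : ι → ℂ)
    (hx : vinner x x = 1) : ∑ i ∈ s, ‖vinner (f i) x‖ ^ 2 ≤ 1 := by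
  have ho : Orthonormal ℂ (fun i : s => WithLp.toLp 2 (f i)) := by
    rw [orthonormal_iff_ite]
    intro i j
    rw [← vinner_eq, hf i i.2 j j.2]
    exact if_congr Subtype.ext_iff.symm rfl rfl
  have h := ho.sum_inner_products_le (WithLp.toLp 2 x) (s := Finset.univ)
  rw [vinner_self] at hx
  have hx' : ‖WithLp.toLp 2 x‖ ^ 2 = 1 := by exact_mod_cast hx
  rw [hx'] at h
  simp only [← vinner_eq] at h
  rwa [Finset.sum_coe_sort s (fun i => ‖vinner (f i) x‖ ^ 2)] at h

theorem norm_comb {τ : Type*} [DecidableEq τ] (s : Finset τ) (f : τ → ι → ℂ)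
    (hf : ∀ i ∈ s, ∀ j ∈ s, vinner (f i) (f j) = if i = j then 1 else 0) (c d : τ → ℂ) :
    vinner (∑ i ∈ s, c i • f i) (∑ i ∈ s, d i • f i) = ∑ i ∈ s, star (c i) * d i := by
  rw [vinner_sum_left]
  refine Finset.sum_congr rfl fun i hi => ?_
  rw [vinner_sum_right, Finset.sum_eq_single i]
  · rw [vinner_smul_left, vinner_smul_right, hf i hi i hi]; simp
  · intro j hj hji
    rw [vinner_smul_left, vinner_smul_right, hf i hi j hj]; simp [hji.symm]
  · exact fun h => absurd hi h

/-- Rewriting of a vector of Schmidt rank at most `k` with orthonormal left factors. -/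
theorem schmidt_orth {k : ℕ} (u : ι × κ → ℂ) (hu : SchmidtRankLE k u) :
    ∃ (s : ℕ) (e : Fin s → ι → ℂ) (f : Fin s → κ → ℂ), s ≤ k ∧
      (∀ i j, vinner (e i) (e j) = if i = j then 1 else 0) ∧ u = ∑ l, prodVec (e l) (f l) := by
  obtain ⟨c, d, rfl⟩ := hu
  let V : Submodule ℂ (EuclideanSpace ℂ ι) :=
    Submodule.span ℂ (Set.range fun j => (WithLp.toLp 2 (c j) : EuclideanSpace ℂ ι))
  let B := stdOrthonormalBasis ℂ V
  have hc : ∀ j, (WithLp.toLp 2 (c j) : EuclideanSpace ℂ ι) ∈ V :=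
    fun j => Submodule.subset_span ⟨j, rfl⟩
  refine ⟨Module.finrank ℂ V, fun l => (B l : EuclideanSpace ℂ ι).ofLp,
    fun l => ∑ j, (inner ℂ (B l) ⟨_, hc j⟩ : ℂ) • d j, ?_, ?_, ?_⟩
  · exact (finrank_range_le_card _).trans (by simp)
  · intro i j
    rw [vinner_eq]
    have := orthonormal_iff_ite.1 B.orthonormal i j
    simpa using this
  · ext p
    have key : ∀ j, c j p.1 = ∑ l, (inner ℂ (B l) ⟨_, hc j⟩ : ℂ) * (B l : EuclideanSpace ℂ ι).ofLp p.1 := by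
      intro j
      have h := B.sum_repr' ⟨_, hc j⟩
      have h2 := congrArg (fun x : V => (x : EuclideanSpace ℂ ι).ofLp p.1) h
      simp only [Submodule.coe_sum, Submodule.coe_smul, WithLp.ofLp_sum, WithLp.ofLp_smul,
        Finset.sum_apply, Pi.smul_apply, smul_eq_mul] at h2
      exact h2.symm
    simp only [Finset.sum_apply, prodVec, Pi.smul_apply, smul_eq_mul]
    simp_rw [key, Finset.sum_mul, Finset.mul_sum]
    rw [Finset.sum_comm]
    refine Finset.sum_congr rfl fun i _ => Finset.sum_congr rfl fun j _ => by ring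

theorem key_bound {k d : ℕ} (hk1 : 1 ≤ k) (hk : k ≤ d) (a : ℕ → ι → ℂ) (b : ℕ → κ → ℂ)
    (ha : ∀ i ∈ Finset.range d, ∀ j ∈ Finset.range d, vinner (a i) (a j) = if i = j then 1 else 0)
    (hb : ∀ i ∈ Finset.range d, ∀ j ∈ Finset.range d, vinner (b i) (b j) = if i = j then 1 else 0)
    (β : ℕ → ℝ) (hβ0 : ∀ i, i < d → 0 ≤ β i) (hβ : ∀ i j, i ≤ j → j < d → β j ≤ β i)
    (u : ι × κ → ℂ) (hu1 : vinner u u = 1) (hu : SchmidtRankLE k u) :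
    ‖vinner u (∑ i ∈ Finset.range d, (β i : ℂ) • prodVec (a i) (b i))‖ ^ 2
      ≤ ∑ i ∈ Finset.range k, β i ^ 2 := by
  obtain ⟨s, e, f, hs, he, rfl⟩ := schmidt_orth u hu
  set g : Fin s → κ → ℂ := fun l => ∑ i ∈ Finset.range d, ((β i : ℂ) * vinner (e l) (a i)) • b i
    with hg
  have prodorth : ∀ (f g : Fin s → κ → ℂ),
      vinner (∑ l, prodVec (e l) (f l)) (∑ l, prodVec (e l) (g l)) = ∑ l, vinner (f l) (g l) := by
    intro f g
    rw [vinner_sum_left]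
    refine Finset.sum_congr rfl fun i _ => ?_
    rw [vinner_sum_right]
    simp [vinner_prodVec, he]
  have h1 : vinner (∑ l, prodVec (e l) (f l))
      (∑ i ∈ Finset.range d, (β i : ℂ) • prodVec (a i) (b i)) =
      vinner (∑ l, prodVec (e l) (f l)) (∑ l, prodVec (e l) (g l)) := by
    rw [prodorth, vinner_sum_left]
    refine Finset.sum_congr rfl fun l _ => ?_
    rw [vinner_sum_right, hg, vinner_sum_right]
    refine Finset.sum_congr rfl fun i _ => ?_
    rw [vinner_smul_right, vinner_smul_right, vinner_prodVec]; ring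
  have h2 : vinner (∑ l, prodVec (e l) (g l)) (∑ l, prodVec (e l) (g l)) =
      ((∑ i ∈ Finset.range d, (∑ l, ‖vinner (e l) (a i)‖ ^ 2) * β i ^ 2 : ℝ) : ℂ) := by
    rw [prodorth]
    simp only [hg, norm_comb _ b hb]
    push_cast
    rw [Finset.sum_comm]
    refine Finset.sum_congr rfl fun i _ => ?_
    rw [Finset.sum_mul]
    refine Finset.sum_congr rfl fun l _ => ?_
    rw [← Complex.conj_mul']
    simp only [star_mul', RCLike.star_def, Complex.conj_ofReal]
    ring
  rw [h1]
  refine (vinner_cs _ _ 1 _ (by simpa using hu1) h2).trans ?_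
  rw [one_mul]
  apply thresh (Finset.range d) (Finset.range k) (Finset.range_subset_range.2 hk) _ _ (β (k-1) ^ 2)
  · intro i hi; positivity
  · intro i hi
    exact bessel Finset.univ e (fun i _ j _ => he i j) (a i) (by rw [ha i hi i hi]; simp)
  · intro i hi
    rw [Finset.mem_range] at hi
    exact pow_le_pow_left₀ (hβ0 _ (by omega)) (hβ _ _ (by omega) (by omega)) 2
  · intro i hi hi'
    rw [Finset.mem_range] at hi hi'
    exact pow_le_pow_left₀ (hβ0 _ (by omega)) (hβ _ _ (by omega) (by omega)) 2
  · apply mul_le_mul_of_nonneg_left _ (sq_nonneg _)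
    rw [Finset.sum_comm, Finset.card_range]
    calc _ ≤ ∑ l : Fin s, (1 : ℝ) := by
            apply Finset.sum_le_sum
            intro l _
            refine le_trans (le_of_eq ?_) (bessel (Finset.range d) a ha (e l) (by rw [he]; simp))
            refine Finset.sum_congr rfl fun i _ => ?_
            rw [← vinner_conj, norm_star]
      _ = s := by simp
      _ ≤ k := by exact_mod_cast hs

theorem skVecNorm_bound {k : ℕ} (w u : ι × κ → ℂ) (hw : skVecNorm k w ≤ 1)
    (hu : SchmidtRankLE k u) (F : ℝ) (hF : vinner u u = (F : ℂ)) : ‖vinner w u‖ ≤ √F := by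
  have hF' := hF
  rw [vinner_self] at hF'
  have hn : ‖WithLp.toLp 2 u‖ ^ 2 = F := by exact_mod_cast hF'
  have hF0 : 0 ≤ F := by rw [← hn]; positivity
  rcases hF0.eq_or_lt with h0 | hpos
  · have := vinner_cs w u _ F (vinner_self w) hF
    rw [← h0, mul_zero] at this
    have h3 : ‖vinner w u‖ = 0 := by
      have := le_antisymm this (sq_nonneg _)
      simpa using this
    rw [h3]; positivity
  · have hs : 0 < √F := Real.sqrt_pos.2 hpos
    have hbdd : BddAbove { r | ∃ u : ι × κ → ℂ, vinner u u = 1 ∧ SchmidtRankLE k u ∧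
        r = ‖vinner u w‖ } := by
      refine ⟨‖WithLp.toLp 2 w‖, ?_⟩
      rintro _ ⟨u, hu1, -, rfl⟩
      have := vinner_cs u w 1 _ (by simpa using hu1) (vinner_self w)
      rw [one_mul] at this
      exact le_of_sq_le_sq this (norm_nonneg _)
    have := le_csSup hbdd ⟨((√F)⁻¹ : ℂ) • u, ?_, ?_, rfl⟩
    · have h4 := this.trans hw
      rw [vinner_smul_left, norm_mul, norm_star, norm_inv, Complex.norm_real, Real.norm_eq_abs,
        abs_of_pos hs, ← vinner_conj, norm_star, inv_mul_le_iff₀ hs, mul_one] at h4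
      exact h4
    · rw [vinner_smul_left, vinner_smul_right, hF]
      have : ((√F : ℝ) : ℂ) * (√F : ℝ) = F := by
        rw [← Complex.ofReal_mul, Real.mul_self_sqrt hF0]
      have hne : ((√F : ℝ) : ℂ) ≠ 0 := by exact_mod_cast hs.ne'
      simp only [RCLike.star_def, map_inv₀, Complex.conj_ofReal]
      rw [← this]
      field_simp
    · obtain ⟨c, d, rfl⟩ := hu
      refine ⟨fun i => ((√F)⁻¹ : ℂ) • c i, d, ?_⟩
      rw [Finset.smul_sum]
      refine Finset.sum_congr rfl fun i _ => ?_
      ext p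
      simp [prodVec, mul_assoc]

theorem schmidtRankLE_sum (s : Finset ℕ) (c : ℕ → ℂ) (a : ℕ → ι → ℂ) (b : ℕ → κ → ℂ) :
    SchmidtRankLE s.card (∑ i ∈ s, c i • prodVec (a i) (b i)) := by
  refine ⟨fun j => c (s.equivFin.symm j) • a (s.equivFin.symm j),
    fun j => b (s.equivFin.symm j), ?_⟩
  rw [← Finset.sum_coe_sort, ← s.equivFin.symm.sum_comp]
  refine Finset.sum_congr rfl fun i _ => ?_
  ext p
  simp [prodVec, mul_assoc]

/-- for a unit vector `v` with Schmidt coefficients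
`α 0 ≥ α 1 ≥ ⋯ ≥ α (min m n - 1) ≥ 0` (presented via a Schmidt decomposition; the 0-based
`α i` is the paper's `α_{i+1}`), with `r` and `α̃` as in the paper, the dual of the s(k)
vector norm satisfies `‖v‖_{s(k)}° = sqrt(Σ_{i=1}^r α_i² + (k-r)·α̃²)`. -/
theorem dual_skVecNorm_of_vector {m n k : ℕ} (hk1 : 1 ≤ k) (hk : k ≤ min m n)
    (v : Fin m × Fin n → ℂ) (hv : vinner v v = 1)
    (α : ℕ → ℝ) (a : ℕ → Fin m → ℂ) (b : ℕ → Fin n → ℂ)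
    (hα0 : ∀ i, i < min m n → 0 ≤ α i)
    (hαmono : ∀ i j, i ≤ j → j < min m n → α j ≤ α i)
    (ha : ∀ i j, i < min m n → j < min m n → vinner (a i) (a j) = if i = j then 1 else 0)
    (hb : ∀ i j, i < min m n → j < min m n → vinner (b i) (b j) = if i = j then 1 else 0)
    (hdec : v = ∑ i ∈ Finset.range (min m n), α i • prodVec (a i) (b i))
    (r : ℕ) (hrk : r < k)
    (hr : 1 ≤ r → (∑ i ∈ Finset.Ico r (min m n), α i) / ((k : ℝ) - r) < α (r - 1))
    (hrmax : ∀ j, r < j → j < k →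
      ¬ ((∑ i ∈ Finset.Ico j (min m n), α i) / ((k : ℝ) - j) < α (j - 1))) :
    dualNormV (skVecNorm k) v =
      Real.sqrt ((∑ i ∈ Finset.range r, α i ^ 2) +
        ((k : ℝ) - r) * ((∑ i ∈ Finset.Ico r (min m n), α i) / ((k : ℝ) - r)) ^ 2) := by
  set d := min m n with hd
  set S := ∑ i ∈ Finset.Ico r d, α i with hS
  have hq : (0 : ℝ) < (k : ℝ) - r := by
    have : (r : ℝ) < k := by exact_mod_cast hrk
    linarith
  set t := S / ((k : ℝ) - r) with ht
  have htS : ((k : ℝ) - r) * t = S := by rw [ht]; field_simp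
  have hS0 : 0 ≤ S := Finset.sum_nonneg fun i hi => hα0 i (Finset.mem_Ico.1 hi).2
  have ht0 : 0 ≤ t := div_nonneg hS0 hq.le
  have hsplit : S = α r + ∑ i ∈ Finset.Ico (r + 1) d, α i :=
    Finset.sum_eq_sum_Ico_succ_bot (by omega) _
  have htail : 0 ≤ ∑ i ∈ Finset.Ico (r + 1) d, α i :=
    Finset.sum_nonneg fun i hi => hα0 i (Finset.mem_Ico.1 hi).2
  -- the tail coefficients are at most `t`
  have hrt : α r ≤ t := by
    rw [ht, le_div_iff₀ hq]
    by_cases h : r + 1 < k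
    · have h1 := not_lt.1 (hrmax (r + 1) (by omega) h)
      have hq' : (0 : ℝ) < (k : ℝ) - ((r + 1 : ℕ) : ℝ) := by
        have : ((r + 1 : ℕ) : ℝ) < k := by exact_mod_cast h
        linarith
      rw [le_div_iff₀ hq'] at h1
      simp only [Nat.add_sub_cancel] at h1
      push_cast at h1
      linarith
    · have : k = r + 1 := by omega
      have : (k : ℝ) = r + 1 := by exact_mod_cast this
      rw [this, hsplit]
      linarith
  have hαt : ∀ i, r ≤ i → i < d → α i ≤ t := fun i h1 h2 => (hαmono r i h1 h2).trans hrt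
  set F := (∑ i ∈ Finset.range r, α i ^ 2) + ((k : ℝ) - r) * t ^ 2 with hFdef
  have hF0 : 0 ≤ F := add_nonneg (Finset.sum_nonneg fun i _ => sq_nonneg _) (by positivity)
  have ha' : ∀ i ∈ Finset.range d, ∀ j ∈ Finset.range d,
      vinner (a i) (a j) = if i = j then 1 else 0 := fun i hi j hj =>
    ha i j (Finset.mem_range.1 hi) (Finset.mem_range.1 hj)
  have hb' : ∀ i ∈ Finset.range d, ∀ j ∈ Finset.range d,
      vinner (b i) (b j) = if i = j then 1 else 0 := fun i hi j hj =>
    hb i j (Finset.mem_range.1 hi) (Finset.mem_range.1 hj)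
  have hab : ∀ i ∈ Finset.range d, ∀ j ∈ Finset.range d,
      vinner (prodVec (a i) (b i)) (prodVec (a j) (b j)) = if i = j then 1 else 0 := by
    intro i hi j hj
    rw [vinner_prodVec, ha' i hi j hj, hb' i hi j hj]
    split_ifs <;> simp
  have hdec' : v = ∑ i ∈ Finset.range d, (α i : ℂ) • prodVec (a i) (b i) := by
    rw [hdec]
    refine Finset.sum_congr rfl fun i _ => ?_
    ext p; simp
  set β : ℕ → ℝ := fun i => if i < r then α i else t with hβdef
  have sum_split : ∀ (f : ℕ → ℝ) (N : ℕ), r ≤ N → ∑ i ∈ Finset.range N, f i =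
      ∑ i ∈ Finset.range r, f i + ∑ i ∈ Finset.Ico r N, f i := fun f N h =>
    (Finset.sum_range_add_sum_Ico f h).symm
  have hβ1 : ∀ (f : ℕ → ℝ → ℝ), ∑ i ∈ Finset.range r, f i (β i) =
      ∑ i ∈ Finset.range r, f i (α i) := fun f =>
    Finset.sum_congr rfl fun i hi => by simp [hβdef, Finset.mem_range.1 hi]
  have hβ2 : ∀ (f : ℕ → ℝ → ℝ) (N : ℕ), ∑ i ∈ Finset.Ico r N, f i (β i) =
      ∑ i ∈ Finset.Ico r N, f i t := fun f N =>
    Finset.sum_congr rfl fun i hi => by simp [hβdef, not_lt.2 (Finset.mem_Ico.1 hi).1]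
  have hβk : ∑ i ∈ Finset.range k, β i ^ 2 = F := by
    rw [sum_split _ k hrk.le, hβ1 (fun _ x => x ^ 2), hβ2 (fun _ x => x ^ 2)]
    simp [hFdef, Nat.cast_sub hrk.le]
  have hβα : ∑ i ∈ Finset.range d, β i * α i = F := by
    rw [sum_split _ d (by omega), hβ1 (fun i x => x * α i), hβ2 (fun i x => x * α i),
      ← Finset.mul_sum, ← hS, ← htS, hFdef]
    congr 1
    · exact Finset.sum_congr rfl fun i _ => by ring
    · ring
  have hub : ∀ x ∈ { x | ∃ w : Fin m × Fin n → ℂ, skVecNorm k w ≤ 1 ∧ x = ‖vinner w v‖ },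
      x ≤ √F := by
    rintro _ ⟨w, hw, rfl⟩
    -- a phase making the inner product real
    obtain ⟨c, hc1, hc⟩ : ∃ c : ℂ, ‖c‖ = 1 ∧ (‖vinner w v‖ : ℂ) = c * vinner w v :=
      RCLike.exists_norm_eq_mul_self _
    set z : ℕ → ℝ := fun i => (c * vinner w (prodVec (a i) (b i))).re with hz
    have hre : ∀ (s : Finset ℕ) (γ : ℕ → ℝ),
        (c * vinner w (∑ i ∈ s, (γ i : ℂ) • prodVec (a i) (b i))).re = ∑ i ∈ s, γ i * z i := by
      intro s γ
      rw [vinner_sum_right, Finset.mul_sum, Complex.re_sum]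
      refine Finset.sum_congr rfl fun i _ => ?_
      rw [vinner_smul_right, mul_left_comm, Complex.re_ofReal_mul]
    have hqd : k - r ≤ (Finset.Ico r d).card := by rw [Nat.card_Ico]; omega
    obtain ⟨I, hIS, hIc, hI⟩ := top_bound (Finset.Ico r d) z (k - r) (by omega) hqd
    have hI2 : ∑ i ∈ Finset.Ico r d, α i * z i ≤ ∑ i ∈ I, t * z i := by
      rcases ht0.eq_or_lt with h0 | hpos
      · rw [← h0]
        simp only [zero_mul, Finset.sum_const_zero]
        refine le_of_eq (Finset.sum_eq_zero fun i hi => ?_)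
        rw [Finset.mem_Ico] at hi
        have := hαt i hi.1 hi.2
        rw [le_antisymm (this.trans h0.symm.le) (hα0 i hi.2), zero_mul]
      · have h3 := hI (fun i => α i / t)
          (fun i hi => div_nonneg (hα0 i (Finset.mem_Ico.1 hi).2) ht0)
          (fun i hi => (div_le_one hpos).2 (hαt i (Finset.mem_Ico.1 hi).1 (Finset.mem_Ico.1 hi).2))
          (by
            rw [← Finset.sum_div, ← hS, ← htS, Nat.cast_sub hrk.le]
            field_simp)
        have h4 := mul_le_mul_of_nonneg_left h3 ht0
        rw [Finset.mul_sum, Finset.mul_sum] at h4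
        refine le_trans (le_of_eq ?_) h4
        refine Finset.sum_congr rfl fun i _ => ?_
        field_simp
    have hdisj : Disjoint (Finset.range r) I := by
      rw [Finset.disjoint_left]
      intro i hi hi'
      have := (Finset.mem_Ico.1 (hIS hi')).1
      rw [Finset.mem_range] at hi
      omega
    have hsub : ∀ i ∈ Finset.range r ∪ I, i ∈ Finset.range d := by
      intro i hi
      rw [Finset.mem_range]
      rcases Finset.mem_union.1 hi with h | h
      · rw [Finset.mem_range] at h; omega
      · exact (Finset.mem_Ico.1 (hIS h)).2
    have hβI : ∀ (f : ℕ → ℝ → ℝ), ∑ i ∈ I, f i (β i) = ∑ i ∈ I, f i t := fun f =>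
      Finset.sum_congr rfl fun i hi => by
        simp [hβdef, not_lt.2 (Finset.mem_Ico.1 (hIS hi)).1]
    have hsr := schmidtRankLE_sum (Finset.range r ∪ I) (fun i => (β i : ℂ)) a b
    rw [Finset.card_union_of_disjoint hdisj, Finset.card_range, hIc,
      Nat.add_sub_cancel' hrk.le] at hsr
    have hnorm := norm_comb (Finset.range r ∪ I) (fun i => prodVec (a i) (b i))
      (fun i hi j hj => hab i (hsub i hi) j (hsub j hj)) (fun i => (β i : ℂ)) (fun i => (β i : ℂ))
    have hnorm2 : ∑ i ∈ Finset.range r ∪ I, star (β i : ℂ) * (β i : ℂ) = ((F : ℝ) : ℂ) := by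
      rw [← hβk, sum_split _ k hrk.le, hβ1 (fun _ x => x ^ 2), hβ2 (fun _ x => x ^ 2)]
      have : ∑ i ∈ Finset.range r ∪ I, β i ^ 2 =
          ∑ i ∈ Finset.range r, α i ^ 2 + ∑ i ∈ Finset.Ico r k, t ^ 2 := by
        rw [Finset.sum_union hdisj, hβ1 (fun _ x => x ^ 2), hβI (fun _ x => x ^ 2)]
        simp [hIc]
      rw [← this]
      push_cast
      refine Finset.sum_congr rfl fun i _ => ?_
      simp only [RCLike.star_def, Complex.conj_ofReal]
      ring
    have hbd := skVecNorm_bound w _ hw hsr F (hnorm.trans hnorm2)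
    have e1 : ‖vinner w v‖ = ∑ i ∈ Finset.range d, α i * z i := by
      rw [← hre, ← hdec', ← hc, Complex.ofReal_re]
    rw [e1]
    refine le_trans ?_ hbd
    calc ∑ i ∈ Finset.range d, α i * z i
        ≤ ∑ i ∈ Finset.range r ∪ I, β i * z i := by
          rw [sum_split _ d (by omega), Finset.sum_union hdisj, hβ1 (fun i x => x * z i),
            hβI (fun i x => x * z i)]
          linarith
      _ ≤ _ := by
          rw [← hre]
          refine (Complex.re_le_norm _).trans ?_
          rw [norm_mul, hc1, one_mul]
  apply le_antisymm
  · exact Real.sSup_le hub (Real.sqrt_nonneg _)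
  · refine le_csSup ⟨_, hub⟩ ⟨((√F)⁻¹ : ℂ) • ∑ i ∈ Finset.range d, (β i : ℂ) • prodVec (a i) (b i),
      ?_, ?_⟩
    · refine Real.sSup_le ?_ zero_le_one
      rintro _ ⟨u, hu1, hu, rfl⟩
      have hk' := key_bound hk1 hk a b ha' hb' β ?_ ?_ u hu1 hu
      · rw [hβk] at hk'
        have h5 : ‖vinner u (∑ i ∈ Finset.range d, (β i : ℂ) • prodVec (a i) (b i))‖ ≤ √F :=
          Real.le_sqrt_of_sq_le hk'
        rw [vinner_smul_right, norm_mul, norm_inv, Complex.norm_real, Real.norm_eq_abs,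
          abs_of_nonneg (Real.sqrt_nonneg _)]
        exact inv_mul_le_one_of_le₀ h5 (Real.sqrt_nonneg _)
      · intro i hi
        simp only [hβdef]
        split_ifs
        · exact hα0 i hi
        · exact ht0
      · intro i j hij hj
        simp only [hβdef]
        split_ifs with h1 h2 h2
        · exact hαmono i j hij hj
        · omega
        · exact (hr (by omega)).le.trans (hαmono i (r - 1) (by omega) (by omega))
        · exact le_rfl
    · rw [vinner_smul_left, hdec', norm_comb _ _ hab]
      have : ∑ i ∈ Finset.range d, star (β i : ℂ) * (α i : ℂ) = ((F : ℝ) : ℂ) := by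
        rw [← hβα]
        push_cast
        refine Finset.sum_congr rfl fun i _ => ?_
        simp only [RCLike.star_def, Complex.conj_ofReal]
      rw [this, norm_mul, norm_star, norm_inv, Complex.norm_real, Complex.norm_real,
        Real.norm_eq_abs, Real.norm_eq_abs, abs_of_nonneg (Real.sqrt_nonneg _), abs_of_nonneg hF0,
        inv_mul_eq_div, Real.div_sqrt]

end Ent
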